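/- Arc consistency of the R-LINEAR EQUALITY conclusion: consider a single linear equality Σ_{i≤p} a_i x_i - Σ_{i>p} a_i x_i = b over real intervals [l_i, h_i] with all a_i > 0, and let [l'_j, h'_j] be the reduced intervals produced by the R-LINEAR EQUALITY rule (l'_j = max(l_j, γ_j), h'_j = min(h_j, α_j) for j ≤ p; l'_j = max(l_j, β_j), h'_j = min(h_j, δ_j) for j > p). If all reduced intervals are nonempty (l'_i ≤ h'_i for all i), then for every index j and every value d ∈ [l'_j, h'_j] there exists a solution (d_1,...,d_n) of the equation with d_j = d and d_i ∈ [l'_i, h'_i] for all i. -/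

import Mathlib

open Finset

theorem aux_interval {n : ℕ} (lo hi : Fin n → ℝ) (b : ℝ) (hle : ∀ i, lo i ≤ hi i)
    (j : Fin n) (y : ℝ) (h1 : lo j ≤ y) (h2 : y ≤ hi j)
    (h3 : b - (∑ i, hi i - hi j) ≤ y) (h4 : y ≤ b - (∑ i, lo i - lo j)) :
    ∃ t : Fin n → ℝ, t j = y ∧ (∀ i, (lo i ≤ t i ∧ b - (∑ k, hi k - hi i) ≤ t i) ∧
      (t i ≤ hi i ∧ t i ≤ b - (∑ k, lo k - lo i))) ∧ ∑ i, t i = b := by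
  obtain ⟨θ, h0, hθ1, hθ⟩ : ∃ θ : ℝ, 0 ≤ θ ∧ θ ≤ 1 ∧
      (∑ i, lo i - lo j) + θ * ((∑ i, hi i - hi j) - (∑ i, lo i - lo j)) = b - y := by
    generalize (∑ i, lo i - lo j) = A at *
    generalize (∑ i, hi i - hi j) = B at *
    rcases eq_or_lt_of_le (show A ≤ B by linarith) with hAB | hAB
    · exact ⟨0, le_rfl, zero_le_one, by linarith⟩
    · have hp : 0 < B - A := by linarith
      refine ⟨(b - y - A) / (B - A), div_nonneg (by linarith) hp.le, ?_, ?_⟩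
      · rw [div_le_one hp]; linarith
      · rw [div_mul_cancel₀ _ hp.ne']; ring
  let u : Fin n → ℝ := fun i => lo i + θ * (hi i - lo i)
  let t : Fin n → ℝ := Function.update u j y
  have hbox : ∀ i, lo i ≤ t i ∧ t i ≤ hi i := by
    intro i
    by_cases hij : i = j
    · subst hij; simp [t, h1, h2]
    · simp only [t, Function.update_of_ne hij, u]
      have := hle i
      constructor <;> nlinarith
  have hsum : ∑ i, t i = b := by
    have e1 : ∑ i, u i = ∑ i, lo i + θ * (∑ i, hi i - ∑ i, lo i) := by
      simp only [u, Finset.sum_add_distrib, ← Finset.mul_sum, Finset.sum_sub_distrib]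
    have e2 : ∑ i, t i = ∑ i, u i - u j + y := by
      have := Finset.sum_update_of_mem (Finset.mem_univ j) u y
      have h5 := Finset.sum_sdiff (f := u) (Finset.subset_univ {j})
      simp only [Finset.sum_singleton] at h5
      simp only [t]
      linarith
    rw [e2, e1]
    simp only [u]
    linarith
  refine ⟨t, by simp [t], fun i => ?_, hsum⟩
  have k1 : t i - lo i ≤ ∑ k, (t k - lo k) :=
    Finset.single_le_sum (f := fun k => t k - lo k)
      (fun k _ => by linarith [(hbox k).1]) (Finset.mem_univ i)
  have k2 : hi i - t i ≤ ∑ k, (hi k - t k) :=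
    Finset.single_le_sum (f := fun k => hi k - t k)
      (fun k _ => by linarith [(hbox k).2]) (Finset.mem_univ i)
  rw [Finset.sum_sub_distrib] at k1 k2
  obtain ⟨q1, q2⟩ := hbox i
  refine ⟨⟨q1, by linarith⟩, q2, by linarith⟩

theorem rlinear_equality_arc_consistent
    (n p : ℕ) (a l h : Fin n → ℝ) (b : ℝ)
    (ha : ∀ i, 0 < a i)
    (pos neg : Finset (Fin n))
    (hpos : pos = Finset.univ.filter (fun i : Fin n => (i : ℕ) < p))
    (hneg : neg = Finset.univ.filter (fun i : Fin n => ¬ (i : ℕ) < p))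
    (l' h' : Fin n → ℝ)
    (hl' : ∀ j, l' j =
      if j ∈ pos then
        max (l j) ((b - ∑ i ∈ pos.erase j, a i * h i + ∑ i ∈ neg, a i * l i) / a j)
      else
        max (l j) ((-b + ∑ i ∈ pos, a i * l i - ∑ i ∈ neg.erase j, a i * h i) / a j))
    (hh' : ∀ j, h' j =
      if j ∈ pos then
        min (h j) ((b - ∑ i ∈ pos.erase j, a i * l i + ∑ i ∈ neg, a i * h i) / a j)
      else
        min (h j) ((-b + ∑ i ∈ pos, a i * h i - ∑ i ∈ neg.erase j, a i * l i) / a j))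
    (hne : ∀ i, l' i ≤ h' i) :
    ∀ j : Fin n, ∀ d : ℝ, l' j ≤ d → d ≤ h' j →
      ∃ sol : Fin n → ℝ, sol j = d ∧ (∀ i, l' i ≤ sol i ∧ sol i ≤ h' i) ∧
        ∑ i ∈ pos, a i * sol i - ∑ i ∈ neg, a i * sol i = b := by
  have hd : ∀ i, i ∈ neg ↔ i ∉ pos := by intro i; simp [hpos, hneg]
  have split : ∀ f g : Fin n → ℝ, ∑ i, (if i ∈ pos then f i else - g i)
      = ∑ i ∈ pos, f i - ∑ i ∈ neg, g i := by
    intro f g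
    have e1 : Finset.univ.filter (fun i => i ∈ pos) = pos := by ext; simp
    have e2 : Finset.univ.filter (fun i => i ∉ pos) = neg := by ext i; simp [hd]
    rw [Finset.sum_ite, e1, e2, Finset.sum_neg_distrib, sub_eq_add_neg]
  set lo : Fin n → ℝ := fun i => if i ∈ pos then a i * l i else - (a i * h i) with hlo
  set hi : Fin n → ℝ := fun i => if i ∈ pos then a i * h i else - (a i * l i) with hhi
  have SL : ∑ i, lo i = ∑ i ∈ pos, a i * l i - ∑ i ∈ neg, a i * h i :=
    split (fun i => a i * l i) (fun i => a i * h i)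
  have SH : ∑ i, hi i = ∑ i ∈ pos, a i * h i - ∑ i ∈ neg, a i * l i :=
    split (fun i => a i * h i) (fun i => a i * l i)
  have key : ∀ i x, (l' i ≤ x ∧ x ≤ h' i) ↔
      ((lo i ≤ (if i ∈ pos then a i * x else -(a i * x)) ∧
        b - (∑ k, hi k - hi i) ≤ (if i ∈ pos then a i * x else -(a i * x))) ∧
      ((if i ∈ pos then a i * x else -(a i * x)) ≤ hi i ∧
        (if i ∈ pos then a i * x else -(a i * x)) ≤ b - (∑ k, lo k - lo i))) := by
    intro i x
    have c1 : l i ≤ x ↔ a i * l i ≤ a i * x := (mul_le_mul_iff_right₀ (ha i)).symm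
    have c2 : x ≤ h i ↔ a i * x ≤ a i * h i := (mul_le_mul_iff_right₀ (ha i)).symm
    rw [hl', hh', SL, SH]
    by_cases hi' : i ∈ pos
    · have s1 := Finset.add_sum_erase pos (fun i => a i * l i) hi'
      have s2 := Finset.add_sum_erase pos (fun i => a i * h i) hi'
      simp only [hlo, hhi, hi', if_true, max_le_iff, le_min_iff, div_le_iff₀ (ha i),
        le_div_iff₀ (ha i), c1, c2]
      constructor
      · rintro ⟨⟨_, _⟩, _, _⟩
        refine ⟨⟨?_, ?_⟩, ?_, ?_⟩ <;> linarith
      · rintro ⟨⟨_, _⟩, _, _⟩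
        refine ⟨⟨?_, ?_⟩, ?_, ?_⟩ <;> linarith
    · have s1 := Finset.add_sum_erase neg (fun i => a i * l i) ((hd i).2 hi')
      have s2 := Finset.add_sum_erase neg (fun i => a i * h i) ((hd i).2 hi')
      simp only [hlo, hhi, hi', if_false, max_le_iff, le_min_iff, div_le_iff₀ (ha i),
        le_div_iff₀ (ha i), c1, c2]
      constructor
      · rintro ⟨⟨_, _⟩, _, _⟩
        refine ⟨⟨?_, ?_⟩, ?_, ?_⟩ <;> linarith
      · rintro ⟨⟨_, _⟩, _, _⟩
        refine ⟨⟨?_, ?_⟩, ?_, ?_⟩ <;> linarith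
  intro j d hd1 hd2
  have hle : ∀ i, lo i ≤ hi i := fun i => by
    have := (key i (l' i)).1 ⟨le_rfl, hne i⟩
    exact this.1.1.trans this.2.1
  obtain ⟨⟨q1, q2⟩, q3, q4⟩ := (key j d).1 ⟨hd1, hd2⟩
  obtain ⟨t, tj, tb, ts⟩ := aux_interval lo hi b hle j _ q1 q3 q2 q4
  let x : Fin n → ℝ := fun i => if i ∈ pos then t i / a i else - (t i / a i)
  have hx : ∀ i, (if i ∈ pos then a i * x i else -(a i * x i)) = t i := by
    intro i
    have := (ha i).ne'
    by_cases hi' : i ∈ pos <;> simp only [x, hi', if_true, if_false] <;> field_simp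
  refine ⟨x, ?_, fun i => (key i (x i)).2 ?_, ?_⟩
  · have := (hx j).trans tj
    have ha' := (ha j).ne'
    by_cases hi' : j ∈ pos
    · simp only [hi', if_true] at this
      exact mul_left_cancel₀ ha' this
    · simp only [hi', if_false] at this
      exact mul_left_cancel₀ ha' (neg_injective this)
  · rw [hx]; exact tb i
  · rw [← split (fun i => a i * x i) (fun i => a i * x i), ← ts]
    exact Finset.sum_congr rfl (fun i _ => hx i)
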